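/- A finite group G has the strong CFS property if and only if G is (isomorphic to) one of the following: the trivial group, a cyclic group of prime order, C2 × C2, C4, C2 × C2 × C2, or C3 × C3. -/

import Mathlib

/-- `G = A · B`: every element of `G` can be written in exactly one way as `a * b`
with `a ∈ A` and `b ∈ B`. -/
def IsDirectProd {G : Type*} [Group G] (A B : Set G) : Prop :=
  ∀ g : G, ∃! p : G × G, p.1 ∈ A ∧ p.2 ∈ B ∧ p.1 * p.2 = g

/-- `A` is a left factor of `G`: there is `B ⊆ G` with `G = A · B`. -/
def IsLeftFactor {G : Type*} [Group G] (A : Set G) : Prop :=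
  ∃ B : Set G, IsDirectProd A B

/-- `A` is a right factor of `G`: there is `B ⊆ G` with `G = B · A`. -/
def IsRightFactor {G : Type*} [Group G] (A : Set G) : Prop :=
  ∃ B : Set G, IsDirectProd B A

/-- `A` is a factor of `G`: it is a left factor or a right factor of `G`. -/
def IsFactor {G : Type*} [Group G] (A : Set G) : Prop :=
  IsLeftFactor A ∨ IsRightFactor A

/-- A group `G` has the strong CFS property if every Lagrange subset of `G`
(i.e. every subset whose cardinality divides `|G|`) is a factor of `G`. -/
def HasStrongCFS (G : Type*) [Group G] : Prop :=
  ∀ A : Set G, Nat.card A ∣ Nat.card G → IsFactor A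

/-!
Let `S` be a subset of a subgroup `H` with `2 * |S| < |H|`, and let `T` be a set disjoint from `H`
with `|T| = |S|`. If `(H \ S) ∪ T` is a left factor, then each of its complements `B` is also a
complement of `H`, and therefore `S * B = T * B`. With `S = {1}` and `T = {g}` this says that `B`
is stable under multiplication by `g`, which forces the powers of `g` lying in `H` to be trivial.
With `S = {1, x}` and `T = {y, u * y}` it bounds the order of a proper normal subgroup of a
`p`-group by `4`. A group with the strong CFS property is a `p`-group, since a subset of a
subgroup of prime order `q` can have the least prime divisor of `|G|` as its cardinality, so only
the orders `1`, `p`, `4`, `8`, `9` remain.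

Conversely, if `e` is not a quotient `a⁻¹ * b` of two elements of `A`, then `{1, e}` or the subgroup
generated by `e` is a complement of `A` as soon as the cardinalities match. Such an `e` exists
because there are too few quotients.
-/

section

open scoped Pointwise

variable {G : Type*} [Group G] {A B S T : Set G} {H : Subgroup G}

theorem isDirectProd_iff_isComplement : IsDirectProd A B ↔ Subgroup.IsComplement A B := by
  rw [Subgroup.isComplement_iff_existsUnique]
  refine forall_congr' fun g ↦ ?_
  simp only [ExistsUnique, Prod.exists, Prod.forall, Subtype.exists, Subtype.forall,
    Prod.mk.injEq, Subtype.mk.injEq]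
  grind

theorem isDirectProd_of_card [Finite G] (hcard : Nat.card A * Nat.card B = Nat.card G)
    (hinj : ∀ a ∈ A, ∀ a' ∈ A, ∀ b ∈ B, ∀ b' ∈ B, a * b = a' * b' → b = b') :
    IsDirectProd A B := by
  refine isDirectProd_iff_isComplement.2 (Function.Injective.bijective_of_nat_card_le ?_ ?_)
  · rintro ⟨⟨a, ha⟩, ⟨b, hb⟩⟩ ⟨⟨a', ha'⟩, ⟨b', hb'⟩⟩ hab
    obtain rfl := hinj a ha a' ha' b hb b' hb' hab
    simpa using hab
  · rw [Nat.card_prod, hcard]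

namespace IsDirectProd

theorem card_mul_card (h : IsDirectProd A B) : Nat.card A * Nat.card B = Nat.card G :=
  (isDirectProd_iff_isComplement.1 h).card_mul_card

theorem mul_eq_univ (h : IsDirectProd A B) : A * B = Set.univ :=
  (isDirectProd_iff_isComplement.1 h).mul_eq

theorem nonempty_right (h : IsDirectProd A B) : B.Nonempty :=
  (isDirectProd_iff_isComplement.1 h).nonempty_right

theorem eq_and_eq (h : IsDirectProd A B) {a a' b b' : G} (ha : a ∈ A) (ha' : a' ∈ A)
    (hb : b ∈ B) (hb' : b' ∈ B) (hab : a * b = a' * b') : a = a' ∧ b = b' :=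
  Prod.ext_iff.1 <|
    (h (a * b)).unique (y₁ := (a, b)) (y₂ := (a', b')) ⟨ha, hb, rfl⟩ ⟨ha', hb', hab.symm⟩

theorem exists_mul_eq (h : IsDirectProd A B) (g : G) : ∃ a ∈ A, ∃ b ∈ B, a * b = g :=
  Set.mem_mul.1 (h.mul_eq_univ ▸ Set.mem_univ g)

theorem inv (h : IsDirectProd A B) : IsDirectProd B⁻¹ A⁻¹ := by
  intro g
  obtain ⟨a, ha, b, hb, hab⟩ := h.exists_mul_eq g⁻¹
  refine ⟨(b⁻¹, a⁻¹), ⟨by simpa, by simpa, by simp [← mul_inv_rev, hab]⟩, ?_⟩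
  rintro ⟨b', a'⟩ ⟨hb', ha', hab'⟩
  obtain ⟨rfl, rfl⟩ := h.eq_and_eq ha ha' hb hb' (by rw [hab, ← hab']; simp)
  simp

theorem smul (h : IsDirectProd A B) (g : G) : IsDirectProd (g • A) B := by
  intro x
  obtain ⟨a, ha, b, hb, hab⟩ := h.exists_mul_eq (g⁻¹ * x)
  refine ⟨(g * a, b), ⟨Set.smul_mem_smul_set ha, hb, by simp [mul_assoc, hab]⟩, ?_⟩
  rintro ⟨_, b'⟩ ⟨⟨a', ha', rfl⟩, hb', rfl⟩
  obtain ⟨rfl, rfl⟩ := h.eq_and_eq ha ha' hb hb' (by simp [hab, mul_assoc])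
  rfl

theorem preimage_subtypeVal (h : IsDirectProd A B) (hA : A ⊆ H) :
    IsDirectProd (Subtype.val ⁻¹' A : Set H) (Subtype.val ⁻¹' B) := by
  intro g
  obtain ⟨a, ha, b, hb, hab⟩ := h.exists_mul_eq g
  have hbH : b ∈ H := (H.mul_mem_cancel_left (hA ha)).1 (hab ▸ g.2)
  refine ⟨(⟨a, hA ha⟩, ⟨b, hbH⟩), ⟨ha, hb, Subtype.ext hab⟩, ?_⟩
  rintro ⟨⟨a', _⟩, ⟨b', _⟩⟩ ⟨ha', hb', rfl⟩
  obtain ⟨rfl, rfl⟩ := h.eq_and_eq ha ha' hb hb' hab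
  rfl

theorem mul_eq_compl_diff_mul (h : IsDirectProd A B) (hS : S ⊆ A) : S * B = ((A \ S) * B)ᶜ := by
  have hdisj : Disjoint (S * B) ((A \ S) * B) := by
    rw [Set.disjoint_left]
    rintro _ ⟨s, hs, b, hb, rfl⟩ ⟨a, ha, b', hb', hab⟩
    exact ha.2 ((h.eq_and_eq ha.1 (hS hs) hb' hb hab).1 ▸ hs)
  have hunion : S * B ∪ (A \ S) * B = Set.univ := by
    rw [← Set.union_mul, Set.union_sdiff_cancel hS, h.mul_eq_univ]
  exact (isCompl_iff.2 ⟨hdisj, codisjoint_iff.2 hunion⟩).eq_compl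

theorem eq_one_of_mul_mem (h : IsDirectProd (H : Set G) B) {c b : G} (hc : c ∈ H) (hb : b ∈ B)
    (hcb : c * b ∈ B) : c = 1 :=
  (h.eq_and_eq hc H.one_mem hb hcb (one_mul _).symm).1

/-- Two elements `b` and `c * b` of `B` in the same coset of `H` would give two factorizations
`a * b = (a * c⁻¹) * (c * b)`, where `a` is chosen in `H` outside `S ∪ S * c`. -/
theorem subgroup_of_exchange [Finite G] (h : IsDirectProd ((H : Set G) \ S ∪ T) B)
    (hcard : Nat.card ((H : Set G) \ S ∪ T : Set G) = Nat.card H)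
    (hS : 2 * S.ncard < Nat.card H) : IsDirectProd (H : Set G) B := by
  refine isDirectProd_of_card ((congrArg (· * _) hcard.symm).trans h.card_mul_card) ?_
  intro a' ha' a'' ha'' b hb b' hb' hab
  set c := a''⁻¹ * a' with hc_def
  have hc : c ∈ H := H.mul_mem (H.inv_mem ha'') ha'
  obtain ⟨a, haH, ha⟩ : ∃ a ∈ (H : Set G), a ∉ S ∪ (· * c) '' S := by
    refine Set.exists_mem_notMem_of_ncard_lt_ncard ?_ (Set.toFinite _)
    calc (S ∪ (· * c) '' S).ncard ≤ S.ncard + ((· * c) '' S).ncard := Set.ncard_union_le _ _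
      _ ≤ 2 * S.ncard := two_mul S.ncard ▸ Nat.add_le_add_left (Set.ncard_image_le S.toFinite) _
      _ < (H : Set G).ncard := hS
  have hac : a * c⁻¹ ∉ S := fun hmem ↦ ha (.inr ⟨_, hmem, by simp⟩)
  refine (h.eq_and_eq (.inl ⟨haH, fun hmem ↦ ha (.inl hmem)⟩)
    (.inl ⟨H.mul_mem haH (H.inv_mem hc), hac⟩) hb hb' ?_).2
  rw [mul_assoc, eq_comm, hc_def, mul_inv_rev, inv_inv, mul_assoc, ← hab]
  simp

theorem mul_eq_mul_of_exchange (h : IsDirectProd ((H : Set G) \ S ∪ T) B)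
    (hHB : IsDirectProd (H : Set G) B) (hSH : S ⊆ H) (hTH : Disjoint T H) : S * B = T * B := by
  have hdiff : ((H : Set G) \ S ∪ T) \ T = (H : Set G) \ S := by
    rw [Set.union_sdiff_right, (hTH.symm.mono_left Set.sdiff_subset).sdiff_eq_left]
  rw [hHB.mul_eq_compl_diff_mul hSH, h.mul_eq_compl_diff_mul Set.subset_union_right, hdiff]

end IsDirectProd

theorem IsFactor.isLeftFactor_or_inv (h : IsFactor A) : IsLeftFactor A ∨ IsLeftFactor A⁻¹ :=
  h.imp_right fun ⟨B, hB⟩ ↦ ⟨B⁻¹, hB.inv⟩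

theorem IsLeftFactor.card_dvd (h : IsLeftFactor A) (hA : A ⊆ H) : Nat.card A ∣ Nat.card H := by
  obtain ⟨B, hB⟩ := h
  rw [← Nat.card_preimage_of_injOn Subtype.val_injective.injOn fun a ha ↦ ⟨⟨a, hA ha⟩, rfl⟩]
  exact ⟨_, (hB.preimage_subtypeVal hA).card_mul_card.symm⟩

namespace HasStrongCFS

theorem dvd_card_subgroup (hG : HasStrongCFS G) {k : ℕ} (hk : k ∣ Nat.card G)
    (hkH : k ≤ Nat.card H) : k ∣ Nat.card H := by
  obtain ⟨A, hAH, hA⟩ := Set.exists_subset_card_eq hkH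
  rcases (hG A (by rwa [Nat.card_coe_set_eq, hA])).isLeftFactor_or_inv with h | h
  · simpa [hA] using h.card_dvd hAH
  · simpa [hA, Set.natCard_inv] using h.card_dvd (by simpa [Set.inv_subset] using hAH)

variable [Finite G]

theorem exists_mul_eq_mul (hG : HasStrongCFS G) (hSH : S ⊆ H) (hTH : Disjoint T H)
    (hST : T.ncard = S.ncard) (hS : 2 * S.ncard < Nat.card H) :
    ∃ B, IsDirectProd (H : Set G) B ∧ (S * B = T * B ∨ S⁻¹ * B = T⁻¹ * B) := by
  have hcard : Nat.card ((H : Set G) \ S ∪ T : Set G) = Nat.card H := by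
    rw [Nat.card_coe_set_eq, Set.ncard_union_eq (hTH.symm.mono_left Set.sdiff_subset), hST,
      Set.ncard_sdiff_add_ncard_of_subset hSH]
    rfl
  have hinv : ((H : Set G) \ S ∪ T)⁻¹ = (H : Set G) \ S⁻¹ ∪ T⁻¹ := by
    rw [Set.union_inv]
    congr 1
    ext
    simp
  rcases (hG _ (hcard ▸ H.card_subgroup_dvd_card)).isLeftFactor_or_inv with ⟨B, hB⟩ | ⟨B, hB⟩
  · have hHB := hB.subgroup_of_exchange hcard hS
    exact ⟨B, hHB, .inl (hB.mul_eq_mul_of_exchange hHB hSH hTH)⟩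
  · rw [hinv] at hB
    have hHB := hB.subgroup_of_exchange (by rw [← hinv, Set.natCard_inv, hcard])
      (by simpa [← Nat.card_coe_set_eq, Set.natCard_inv] using hS)
    refine ⟨B, hHB, .inr (hB.mul_eq_mul_of_exchange hHB ?_ ?_)⟩
    · simpa [Set.inv_subset] using hSH
    · rw [← inv_coe_set, Set.disjoint_left] at *
      simpa using fun a ↦ @hTH a⁻¹

theorem pow_eq_one_of_pow_mem (hG : HasStrongCFS G) (hH : 3 ≤ Nat.card H) {g : G} (hg : g ∉ H)
    {k : ℕ} (hk : g ^ k ∈ H) : g ^ k = 1 := by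
  obtain ⟨B, hB, hgB⟩ := hG.exists_mul_eq_mul (S := {1}) (T := {g}) (by simp) (by simpa) (by simp)
    (by rwa [Set.ncard_singleton])
  have hstab : g ∈ MulAction.stabilizer G B := by
    rw [Set.inv_singleton, Set.inv_singleton, inv_one, Set.singleton_one, one_mul,
      Set.singleton_mul, Set.singleton_mul] at hgB
    rcases hgB with h | h
    · exact h.symm
    · exact inv_mem_iff.1 h.symm
  obtain ⟨b, hb⟩ := hB.nonempty_right
  refine hB.eq_one_of_mul_mem hk hb ?_
  have hmem := Set.smul_mem_smul_set (a := g ^ k) hb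
  rwa [MulAction.mem_stabilizer_iff.1 (pow_mem hstab k)] at hmem

end HasStrongCFS

/-- If `b ∈ B` and `x * b ∈ B`, write `b = t * y * b'` and `x * b = t' * y * b''` with
`t, t' ∈ {1, u}`. As `H` is normal, `b'` and `b''` lie in the same coset of `H`, so they agree and
`x = t' * t⁻¹`. -/
theorem IsDirectProd.eq_or_eq_inv_of_pair_mul_eq [H.Normal] (h : IsDirectProd (H : Set G) B)
    {x u y : G} (hx : x ∈ H) (hx1 : x ≠ 1) (hu : u ∈ H)
    (hpair : {1, x} * B = {y, u * y} * B) : u = x ∨ u = x⁻¹ := by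
  have exists_factorization {s b : G} (hs : s ∈ ({1, x} : Set G)) (hb : b ∈ B) :
      ∃ t ∈ ({1, u} : Set G), ∃ b' ∈ B, t * y * b' = s * b := by
    obtain ⟨t, rfl | rfl, b', hb', h⟩ : s * b ∈ {y, u * y} * B := hpair ▸ Set.mul_mem_mul hs hb
    · exact ⟨1, by simp, b', hb', by simpa using h⟩
    · exact ⟨u, by simp, b', hb', h⟩
  have mem_of_mem_pair {t : G} (ht : t ∈ ({1, u} : Set G)) : t ∈ H := by
    rcases ht with rfl | rfl
    exacts [H.one_mem, hu]
  obtain ⟨b, hb⟩ := h.nonempty_right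
  obtain ⟨t, ht, b', hb', hb'b⟩ := exists_factorization (Set.mem_insert 1 {x}) hb
  obtain ⟨t', ht', b'', hb'', hb''b⟩ := exists_factorization (Set.mem_insert_of_mem 1 rfl) hb
  have hconj : y⁻¹ * (t'⁻¹ * x * t) * y = 1 := by
    refine h.eq_one_of_mul_mem ?_ hb' ?_
    · have := Subgroup.Normal.conj_mem ‹H.Normal› (t'⁻¹ * x * t)
        (mul_mem (mul_mem (inv_mem (mem_of_mem_pair ht')) hx) (mem_of_mem_pair ht)) y⁻¹
      simpa using this
    · convert hb''
      calc y⁻¹ * (t'⁻¹ * x * t) * y * b' = (t' * y)⁻¹ * (x * (t * y * b')) := by group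
        _ = b'' := by rw [hb'b, one_mul, ← hb''b, inv_mul_cancel_left]
  have hxt : x = t' * t⁻¹ := by
    rw [mul_eq_one_iff_eq_inv, inv_mul_eq_iff_eq_mul, mul_inv_cancel, mul_assoc] at hconj
    exact eq_mul_inv_of_mul_eq (inv_mul_eq_one.1 hconj).symm
  rcases ht with rfl | rfl <;> rcases ht' with rfl | rfl <;> simp_all

namespace HasStrongCFS

variable [Finite G]

theorem card_le_four_of_commute [H.Normal] (hG : HasStrongCFS G) {x y : G} (hx : x ∈ H)
    (hx1 : x ≠ 1) (hy : y ∉ H) (hxy : Commute x y) : Nat.card H ≤ 4 := by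
  by_contra! hH
  obtain ⟨u, hu, hux⟩ : ∃ u ∈ (H : Set G), u ∉ ({1, x, x⁻¹} : Set G) := by
    refine Set.exists_mem_notMem_of_ncard_lt_ncard ?_
    calc ({1, x, x⁻¹} : Set G).ncard ≤ 3 := Set.ncard_insert_le .. |>.trans <|
          Nat.succ_le_succ <| Set.ncard_insert_le .. |>.trans (by simp)
      _ < Nat.card H := by lia
  simp only [Set.mem_insert_iff, Set.mem_singleton_iff, not_or] at hux
  obtain ⟨hu1, hux, hux'⟩ := hux
  have huy : u * y ∉ H := fun h ↦ hy ((H.mul_mem_cancel_left hu).1 h)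
  obtain ⟨B, hB, h | h⟩ := hG.exists_mul_eq_mul (H := H) (S := {1, x}) (T := {y, u * y})
    (by simp [Set.insert_subset_iff, hx, H.one_mem]) (by simp [hy, huy])
    (by rw [Set.ncard_pair hx1.symm, Set.ncard_pair (by simpa)])
    (by rwa [Set.ncard_pair hx1.symm])
  · exact (hB.eq_or_eq_inv_of_pair_mul_eq hx hx1 hu h).elim hux hux'
  · have hinv : ({y, u * y} : Set G)⁻¹ = {y⁻¹, (y⁻¹ * u⁻¹ * y) * y⁻¹} := by simp [Set.inv_insert]
    have hu' : y⁻¹ * u⁻¹ * y ∈ H := by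
      simpa using Subgroup.Normal.conj_mem ‹H.Normal› u⁻¹ (inv_mem hu) y⁻¹
    rw [hinv, Set.inv_insert, inv_one, Set.inv_singleton] at h
    have hu_eq : u = y * (y⁻¹ * u⁻¹ * y)⁻¹ * y⁻¹ := by group
    rcases hB.eq_or_eq_inv_of_pair_mul_eq (inv_mem hx) (by simpa) hu' h with h | h
    · exact hux (by rw [hu_eq, h, inv_inv, ← hxy.eq, mul_inv_cancel_right])
    · exact hux' (by rw [hu_eq, h, inv_inv, ← hxy.inv_left.eq, mul_inv_cancel_right])

end HasStrongCFS

theorem exists_commute_mem_notMem {p : ℕ} [Fact p.Prime] [Finite G] (hG : IsPGroup p G)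
    (hbot : H ≠ ⊥) (htop : H ≠ ⊤) : ∃ x ∈ H, ∃ y ∉ H, x ≠ 1 ∧ Commute x y := by
  obtain ⟨a, haH, ha1⟩ := H.bot_or_exists_ne_one.resolve_left hbot
  have : Nontrivial G := ⟨a, 1, ha1⟩
  by_cases hcenter : Subgroup.center G ≤ H
  · obtain ⟨x, hx, hx1⟩ := SetLike.exists_of_lt hG.bot_lt_center
    obtain ⟨y, hy⟩ := SetLike.exists_not_mem_of_ne_top H htop
    exact ⟨x, hcenter hx, y, hy, hx1, (Subgroup.mem_center_iff.1 hx y).symm⟩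
  · obtain ⟨y, hy, hyH⟩ := SetLike.not_le_iff_exists.1 hcenter
    exact ⟨a, haH, y, hyH, ha1, Subgroup.mem_center_iff.1 hy a⟩

theorem HasStrongCFS.card_le_four [Finite G] [H.Normal] {p : ℕ} [Fact p.Prime]
    (hG : HasStrongCFS G) (hp : IsPGroup p G) (htop : H ≠ ⊤) : Nat.card H ≤ 4 := by
  rcases eq_or_ne H ⊥ with rfl | hbot
  · simp
  · obtain ⟨x, hx, y, hy, hx1, hxy⟩ := exists_commute_mem_notMem hp hbot htop
    exact hG.card_le_four_of_commute hx hx1 hy hxy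

theorem semiconjBy_of_sq_eq_one {g y : G} (hy : y ^ 2 = 1) (hgy : (g * y) ^ 2 = 1) :
    SemiconjBy y g⁻¹ g := by
  have hy_inv : y⁻¹ = y := inv_eq_of_mul_eq_one_left (sq y ▸ hy)
  have hgy_inv : (g * y)⁻¹ = g * y := inv_eq_of_mul_eq_one_left (sq (g * y) ▸ hgy)
  rw [SemiconjBy, ← hgy_inv, mul_inv_rev, hy_inv]

namespace HasStrongCFS

variable [Finite G]

theorem card_eq_prime_pow (hG : HasStrongCFS G) {p : ℕ} (hp : p.Prime) (hpG : p ∣ Nat.card G)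
    (hmin : ∀ q : ℕ, q.Prime → q ∣ Nat.card G → p ≤ q) : ∃ n, Nat.card G = p ^ n := by
  refine ⟨_, Nat.eq_prime_pow_of_unique_prime_dvd Nat.card_pos.ne' fun {q} hq hqG ↦ ?_⟩
  have : Fact q.Prime := ⟨hq⟩
  obtain ⟨x, hx⟩ := exists_prime_orderOf_dvd_card' q hqG
  have hcard : Nat.card (Subgroup.zpowers x) = q := by rw [Nat.card_zpowers, hx]
  have hpq := hG.dvd_card_subgroup hpG (hmin q hq hqG |>.trans hcard.ge)
  rw [hcard] at hpq
  exact ((Nat.prime_dvd_prime_iff_eq hp hq).1 hpq).symm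

theorem pow_le_four (hG : HasStrongCFS G) {p n : ℕ} [hp : Fact p.Prime]
    (hcard : Nat.card G = p ^ (n + 1)) : p ^ n ≤ 4 := by
  obtain ⟨H, hH⟩ := Sylow.exists_subgroup_card_pow_prime (G := G) p (n := n)
    (hcard ▸ pow_dvd_pow p n.le_succ)
  have hindex : H.index = p := by
    have := H.card_mul_index
    rw [hcard, hH, pow_succ] at this
    exact Nat.eq_of_mul_eq_mul_left (pow_pos hp.out.pos _) this
  have : H.Normal := Subgroup.normal_of_index_eq_minFac_card <| by
    rw [hindex, hcard, hp.out.pow_minFac n.succ_ne_zero]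
  rw [← hH]
  refine hG.card_le_four (IsPGroup.of_card hcard) fun htop ↦ hp.out.one_lt.ne ?_
  rw [← hindex, htop, Subgroup.index_top]

theorem card_eq_one_or_prime_or_eq (hG : HasStrongCFS G) : Nat.card G = 1 ∨ (Nat.card G).Prime ∨
    Nat.card G = 4 ∨ Nat.card G = 8 ∨ Nat.card G = 9 := by
  by_cases h1 : Nat.card G = 1
  · exact .inl h1
  have : Fact (Nat.card G).minFac.Prime := ⟨Nat.minFac_prime h1⟩
  obtain ⟨n, hn⟩ := hG.card_eq_prime_pow (Nat.minFac_prime h1) (Nat.minFac_dvd _)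
    fun q hq hqG ↦ Nat.minFac_le_of_dvd hq.two_le hqG
  obtain _ | _ | n := n
  · exact .inl hn
  · exact .inr (.inl (by rw [hn, pow_one]; exact Nat.minFac_prime h1))
  · have hle := hG.pow_le_four hn
    rw [hn]
    generalize (Nat.card G).minFac = p at *
    have hp := Fact.out (p := p.Prime)
    have hp4 : p ≤ 4 := (Nat.le_self_pow n.succ_ne_zero p).trans hle
    have hn2 : n < 3 := by
      have := Nat.lt_pow_self (n := n + 1) hp.one_lt
      lia
    have hp2 := hp.two_le
    interval_cases p <;> interval_cases n <;> norm_num at *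

theorem orderOf_le_two_mul (hG : HasStrongCFS G) {g : G} {k : ℕ} (hk : k ∣ orderOf g)
    (hk1 : 1 < k) : orderOf g ≤ 2 * k := by
  by_contra! hlt
  obtain ⟨m, hm⟩ := hk
  have hcard : Nat.card (Subgroup.zpowers (g ^ k)) = m := by
    rw [Nat.card_zpowers, orderOf_pow_of_dvd (by lia) ⟨m, hm⟩, hm,
      Nat.mul_div_cancel_left _ (by lia)]
  have hm3 : 3 ≤ m := by
    rw [hm] at hlt
    nlinarith
  have hg : g ∉ Subgroup.zpowers (g ^ k) := fun hg ↦ by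
    have hle := Nat.le_of_dvd Nat.card_pos (Subgroup.orderOf_dvd_natCard _ hg)
    rw [hcard, hm] at hle
    nlinarith
  have hgk := hG.pow_eq_one_of_pow_mem (hcard ▸ hm3) hg (Subgroup.mem_zpowers _)
  rw [hgk, Nat.card_zpowers, orderOf_one] at hcard
  lia

theorem exponent_eq_of_card_eq_sq (hG : HasStrongCFS G) {p : ℕ} (hp : p.Prime) (hp2 : 2 < p)
    (hcard : Nat.card G = p ^ 2) : Monoid.exponent G = p := by
  refine (not_isCyclic_iff_exponent_eq_prime hp hcard).1 fun _ ↦ ?_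
  obtain ⟨g, hg⟩ := IsCyclic.exists_ofOrder_eq_natCard (α := G)
  have hle := hG.orderOf_le_two_mul (g := g) (hg ▸ hcard ▸ dvd_pow_self p two_ne_zero) hp.one_lt
  rw [hg, hcard] at hle
  nlinarith

theorem orderOf_ne_four_of_card_eq_eight (hG : HasStrongCFS G) (hcard : Nat.card G = 8) (g : G) :
    orderOf g ≠ 4 := by
  intro hg
  set Z := Subgroup.zpowers g
  have hZ : Nat.card Z = 4 := by rw [Nat.card_zpowers, hg]
  have hindex : Z.index = 2 := by
    have := Z.card_mul_index
    lia
  have hg2 : g ^ 2 ≠ 1 := pow_ne_one_of_lt_orderOf two_ne_zero (by lia)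
  obtain ⟨y, hy⟩ := SetLike.exists_not_mem_of_ne_top Z (by rintro h; simp [h] at hindex)
  have sq_eq_one {z : G} (hz : z ∉ Z) : z ^ 2 = 1 :=
    hG.pow_eq_one_of_pow_mem (by lia) hz (Subgroup.sq_mem_of_index_two hindex z)
  have hgy : g * y ∉ Z := fun h ↦ hy ((Z.mul_mem_cancel_left (Subgroup.mem_zpowers g)).1 h)
  have hgK : g ∉ Subgroup.centralizer {y} := fun h ↦ hg2 <| by
    rw [Subgroup.mem_centralizer_singleton_iff] at h
    rw [← sq_eq_one hgy, Commute.mul_pow h, sq_eq_one hy, mul_one]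
  have hg2K : g ^ 2 ∈ Subgroup.centralizer {y} := by
    have hg2_inv : g⁻¹ ^ 2 = g ^ 2 := by
      rw [inv_pow, inv_eq_of_mul_eq_one_left (by rw [← pow_add]; exact hg ▸ pow_orderOf_eq_one g)]
    rw [Subgroup.mem_centralizer_singleton_iff]
    exact (hg2_inv ▸ (semiconjBy_of_sq_eq_one (sq_eq_one hy) (sq_eq_one hgy)).pow_right 2).eq.symm
  have hK : 3 ≤ Nat.card (Subgroup.centralizer {y}) := by
    refine (Set.two_lt_ncard_iff (Set.toFinite _)).2
      ⟨1, g ^ 2, y, one_mem _, hg2K, ?_, hg2.symm, ?_, ?_⟩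
    · exact Subgroup.mem_centralizer_singleton_iff.2 rfl
    · rintro rfl
      exact hy (one_mem Z)
    · rintro rfl
      exact hy (pow_mem (Subgroup.mem_zpowers g) 2)
  exact hg2 (hG.pow_eq_one_of_pow_mem hK hgK hg2K)

theorem exponent_eq_two_of_card_eq_eight (hG : HasStrongCFS G) (hcard : Nat.card G = 8) :
    Monoid.exponent G = 2 := by
  have : Nontrivial G := Finite.one_lt_card_iff_nontrivial.1 (by lia)
  rw [Monoid.exponent_eq_prime_iff Nat.prime_two]
  intro g hg
  obtain ⟨k, hk, hgk⟩ := (Nat.dvd_prime_pow Nat.prime_two (m := 3)).1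
    (hcard ▸ orderOf_dvd_natCard g)
  interval_cases k
  · simp_all
  · exact hgk
  · exact absurd hgk (hG.orderOf_ne_four_of_card_eq_eight hcard g)
  · have := hG.orderOf_le_two_mul (g := g) (k := 2) (by lia) one_lt_two
    lia

end HasStrongCFS

theorem isDirectProd_of_notMem_inv_mul [Finite G] {e : G}
    (hcard : Nat.card A * Nat.card B = Nat.card G) (he : e ∉ A⁻¹ * A)
    (hB : B * B⁻¹ ⊆ {1, e, e⁻¹}) : IsDirectProd A B := by
  refine isDirectProd_of_card hcard fun a ha a' ha' b hb b' hb' hab ↦ ?_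
  have hdiv : b * b'⁻¹ = a⁻¹ * a' := by
    rw [mul_inv_eq_iff_eq_mul, mul_assoc, ← hab, inv_mul_cancel_left]
  rcases hB (Set.mul_mem_mul hb (Set.inv_mem_inv.2 hb')) with h | h | h
  · exact mul_inv_eq_one.1 h
  · exact absurd (h ▸ hdiv ▸ Set.mul_mem_mul (Set.inv_mem_inv.2 ha) ha') he
  · have he' : a'⁻¹ * a = e := by rw [← inv_inv e, ← h, hdiv, mul_inv_rev, inv_inv]
    exact absurd (he' ▸ Set.mul_mem_mul (Set.inv_mem_inv.2 ha') ha) he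

theorem ne_one_of_notMem_inv_mul {e : G} (hA : A.Nonempty) (he : e ∉ A⁻¹ * A) : e ≠ 1 := by
  rintro rfl
  obtain ⟨a, ha⟩ := hA
  exact he ⟨a⁻¹, Set.inv_mem_inv.2 ha, a, ha, inv_mul_cancel a⟩

theorem isDirectProd_pair [Finite G] {e : G} (hA : Nat.card A * 2 = Nat.card G)
    (he : e ∉ A⁻¹ * A) : IsDirectProd A {1, e} := by
  have hA0 : A.Nonempty := Set.nonempty_iff_ne_empty.2 fun h ↦ by
    simp [h, Nat.card_pos.ne] at hA
  refine isDirectProd_of_notMem_inv_mul ?_ he ?_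
  · rw [Nat.card_coe_set_eq {1, e}, Set.ncard_pair (ne_one_of_notMem_inv_mul hA0 he).symm, hA]
  · simp [Set.mul_subset_iff]

theorem coe_zpowers_of_pow_three_eq_one {e : G} (he : e ^ 3 = 1) :
    (Subgroup.zpowers e : Set G) = {1, e, e⁻¹} := by
  refine Set.Subset.antisymm ?_ (by simp [Set.insert_subset_iff])
  rintro _ ⟨k, rfl⟩
  have hk : k % 3 = 0 ∨ k % 3 = 1 ∨ k % 3 = 2 := by lia
  have h2 : e ^ (2 : ℤ) = e⁻¹ := by
    rw [eq_inv_iff_mul_eq_one, ← zpow_add_one]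
    exact mod_cast he
  dsimp only
  rw [zpow_eq_zpow_emod k (n := 3) (mod_cast he)]
  rcases hk with h | h | h <;> simp [h, h2]

theorem isDirectProd_zpowers [Finite G] {e : G} (hA : Nat.card A * 3 = Nat.card G)
    (he : e ∉ A⁻¹ * A) (he3 : e ^ 3 = 1) : IsDirectProd A (Subgroup.zpowers e) := by
  have hA0 : A.Nonempty := Set.nonempty_iff_ne_empty.2 fun h ↦ by
    simp [h, Nat.card_pos.ne] at hA
  refine isDirectProd_of_notMem_inv_mul ?_ he ?_
  · rw [← hA, ← orderOf_eq_prime he3 (ne_one_of_notMem_inv_mul hA0 he)]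
    exact congrArg _ (Nat.card_zpowers e)
  · rw [inv_coe_set, coe_mul_coe, coe_zpowers_of_pow_three_eq_one he3]

theorem finset_inv_mul_self_subset [DecidableEq G] (A : Finset G) :
    A⁻¹ * A ⊆ insert 1 (A.offDiag.image fun p ↦ p.1⁻¹ * p.2) := by
  intro g hg
  obtain ⟨a, ha, b, hb, rfl⟩ := Finset.mem_mul.1 hg
  rw [Finset.mem_inv'] at ha
  rcases eq_or_ne a⁻¹ b with rfl | hab
  · simp
  · exact Finset.mem_insert_of_mem <|
      Finset.mem_image.2 ⟨(a⁻¹, b), Finset.mem_offDiag.2 ⟨ha, hb, hab⟩, by simp⟩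

theorem ncard_inv_mul_self_le [Finite G] (A : Set G) :
    (A⁻¹ * A).ncard ≤ A.ncard * A.ncard - A.ncard + 1 := by
  classical
  obtain ⟨A, rfl⟩ := (Set.toFinite A).exists_finset_coe
  rw [← Finset.coe_inv, ← Finset.coe_mul, Set.ncard_coe_finset, Set.ncard_coe_finset,
    ← Finset.offDiag_card]
  exact (Finset.card_le_card (finset_inv_mul_self_subset A)).trans <|
    (Finset.card_insert_le _ _).trans <| Nat.succ_le_succ Finset.card_image_le

theorem ncard_inv_mul_self_le_choose_two [Finite G] (hexp : Monoid.exponent G = 2) (A : Set G) :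
    (A⁻¹ * A).ncard ≤ A.ncard.choose 2 + 1 := by
  classical
  obtain ⟨A, rfl⟩ := (Set.toFinite A).exists_finset_coe
  have inv_mul_comm (a b : G) : a⁻¹ * b = b⁻¹ * a := by
    rw [← inv_eq_self_of_exponent_two hexp (a⁻¹ * b), mul_inv_rev, inv_inv]
  have himage : A.offDiag.image (fun p ↦ p.1⁻¹ * p.2) =
      (A.offDiag.image Sym2.mk.uncurry).image (Sym2.lift ⟨fun a b ↦ a⁻¹ * b, inv_mul_comm⟩) := by
    rw [Finset.image_image]
    rfl
  rw [← Finset.coe_inv, ← Finset.coe_mul, Set.ncard_coe_finset, Set.ncard_coe_finset,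
    ← Sym2.card_image_offDiag]
  refine (Finset.card_le_card (finset_inv_mul_self_subset A)).trans <|
    (Finset.card_insert_le _ _).trans <| Nat.succ_le_succ ?_
  exact himage ▸ Finset.card_image_le

theorem exists_notMem_inv_mul_self (hA : (A⁻¹ * A).ncard < Nat.card G) : ∃ e, e ∉ A⁻¹ * A := by
  by_contra! h
  simp [Set.eq_univ_of_forall h, Set.ncard_univ] at hA

theorem isLeftFactor_subgroup (H : Subgroup G) : IsLeftFactor (H : Set G) := by
  obtain ⟨B, hB, -⟩ := H.exists_isComplement_right 1
  exact ⟨B, isDirectProd_iff_isComplement.2 hB⟩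

theorem IsLeftFactor.smul (h : IsLeftFactor A) (g : G) : IsLeftFactor (g • A) :=
  h.imp fun _ hB ↦ hB.smul g

theorem isLeftFactor_pair {a b : G} (h : (a⁻¹ * b) ^ 2 = 1) : IsLeftFactor {a, b} := by
  have hzpowers : (Subgroup.zpowers (a⁻¹ * b) : Set G) = {1, a⁻¹ * b} := by
    refine Set.Subset.antisymm ?_ (by simp [Set.insert_subset_iff])
    rintro _ ⟨k, rfl⟩
    dsimp only
    rw [zpow_eq_zpow_emod k (n := 2) (mod_cast h)]
    rcases Int.emod_two_eq_zero_or_one k with hk | hk <;> simp [hk]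
  simpa [hzpowers, Set.smul_set_insert] using
    (isLeftFactor_subgroup (Subgroup.zpowers (a⁻¹ * b))).smul a

theorem isFactor_of_card_eq_one (hA : Nat.card A = 1) : IsFactor A := by
  rw [Nat.card_coe_set_eq, Set.ncard_eq_one] at hA
  obtain ⟨a, rfl⟩ := hA
  exact .inl ⟨.univ, isDirectProd_iff_isComplement.2 Subgroup.isComplement_singleton_univ⟩

theorem isFactor_of_card_eq [Finite G] (hA : Nat.card A = Nat.card G) : IsFactor A := by
  rw [Nat.card_coe_set_eq, ← Set.ncard_univ] at hA
  obtain rfl := Set.eq_of_subset_of_ncard_le (Set.subset_univ A) hA.ge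
  exact .inl ⟨{1}, isDirectProd_iff_isComplement.2 Subgroup.isComplement_univ_singleton⟩

theorem hasStrongCFS_of_card_eq_prime_pow [Finite G] {p n : ℕ} (hp : p.Prime)
    (hcard : Nat.card G = p ^ n)
    (h : ∀ A : Set G, ∀ k, 0 < k → k < n → A.ncard = p ^ k → IsFactor A) : HasStrongCFS G := by
  intro A hA
  obtain ⟨k, hkn, hk⟩ := (Nat.dvd_prime_pow hp).1 (hcard ▸ hA)
  rcases k.eq_zero_or_pos with rfl | hk0
  · exact isFactor_of_card_eq_one hk
  rcases hkn.eq_or_lt with rfl | hkn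
  · exact isFactor_of_card_eq (hk.trans hcard.symm)
  · exact h A k hk0 hkn hk

theorem hasStrongCFS_of_card_eq_four (hcard : Nat.card G = 4) : HasStrongCFS G := by
  have : Finite G := Nat.finite_of_card_ne_zero (by lia)
  refine hasStrongCFS_of_card_eq_prime_pow Nat.prime_two (n := 2) hcard fun A k hk0 hk2 hA ↦ ?_
  obtain rfl : k = 1 := by lia
  obtain ⟨e, he⟩ := exists_notMem_inv_mul_self
    ((ncard_inv_mul_self_le A).trans_lt (by simp [hA, hcard]))
  exact .inl ⟨_, isDirectProd_pair (by simp [hA, hcard]) he⟩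

theorem hasStrongCFS_of_card_eq_nine (hcard : Nat.card G = 9) (hexp : Monoid.exponent G = 3) :
    HasStrongCFS G := by
  have : Finite G := Nat.finite_of_card_ne_zero (by lia)
  refine hasStrongCFS_of_card_eq_prime_pow Nat.prime_three (n := 2) hcard fun A k hk0 hk2 hA ↦ ?_
  obtain rfl : k = 1 := by lia
  obtain ⟨e, he⟩ := exists_notMem_inv_mul_self
    ((ncard_inv_mul_self_le A).trans_lt (by simp [hA, hcard]))
  exact .inl ⟨_, isDirectProd_zpowers (by simp [hA, hcard]) he
    (hexp ▸ Monoid.pow_exponent_eq_one e)⟩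

theorem hasStrongCFS_of_card_eq_eight (hcard : Nat.card G = 8) (hexp : Monoid.exponent G = 2) :
    HasStrongCFS G := by
  have : Finite G := Nat.finite_of_card_ne_zero (by lia)
  refine hasStrongCFS_of_card_eq_prime_pow Nat.prime_two (n := 3) hcard fun A k hk0 hk3 hA ↦ ?_
  obtain rfl | rfl : k = 1 ∨ k = 2 := by lia
  · obtain ⟨a, b, -, rfl⟩ := Set.ncard_eq_two.1 hA
    exact .inl (isLeftFactor_pair (hexp ▸ Monoid.pow_exponent_eq_one _))
  · obtain ⟨e, he⟩ := exists_notMem_inv_mul_self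
      ((ncard_inv_mul_self_le_choose_two hexp A).trans_lt (by simp [hA, hcard, Nat.choose]))
    exact .inl ⟨_, isDirectProd_pair (by simp [hA, hcard]) he⟩

theorem hasStrongCFS_iff_card_exponent [Finite G] :
    HasStrongCFS G ↔ Nat.card G = 1 ∨ (Nat.card G).Prime ∨ Nat.card G = 4 ∨
      (Nat.card G = 8 ∧ Monoid.exponent G = 2) ∨ (Nat.card G = 9 ∧ Monoid.exponent G = 3) := by
  constructor
  · intro hG
    rcases hG.card_eq_one_or_prime_or_eq with h | h | h | h | h
    · exact .inl h
    · exact .inr (.inl h)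
    · exact .inr (.inr (.inl h))
    · exact .inr (.inr (.inr (.inl ⟨h, hG.exponent_eq_two_of_card_eq_eight h⟩)))
    · exact .inr (.inr (.inr (.inr
        ⟨h, hG.exponent_eq_of_card_eq_sq Nat.prime_three (by norm_num) h⟩)))
  · rintro (h | h | h | ⟨h, hexp⟩ | ⟨h, hexp⟩)
    · exact hasStrongCFS_of_card_eq_prime_pow Nat.prime_two (n := 0) h (by lia)
    · exact hasStrongCFS_of_card_eq_prime_pow h (pow_one _).symm (by lia)
    · exact hasStrongCFS_of_card_eq_four h
    · exact hasStrongCFS_of_card_eq_eight h hexp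
    · exact hasStrongCFS_of_card_eq_nine h hexp

theorem nonempty_linearEquiv_of_card_eq (K : Type*) {V W : Type*} [Field K] [Finite K]
    [AddCommGroup V] [Module K V] [Finite V] [AddCommGroup W] [Module K W] [Finite W]
    (hcard : Nat.card V = Nat.card W) : Nonempty (V ≃ₗ[K] W) := by
  have hfinrank : Module.finrank K V = Module.finrank K W :=
    Nat.pow_right_injective (Finite.one_lt_card (α := K)) <| by
      simpa only [← Module.natCard_eq_pow_finrank] using hcard
  exact ⟨.ofFinrankEq V W hfinrank⟩

section ElementaryAbelian

variable {V : Type*}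

theorem nonempty_mulEquiv_of_exponent_eq_prime {G : Type*} [CommGroup G] [CommGroup V] [Finite G]
    [Finite V] {p : ℕ} [Fact p.Prime] (hG : Monoid.exponent G = p) (hV : Monoid.exponent V = p)
    (hcard : Nat.card G = Nat.card V) : Nonempty (G ≃* V) := by
  let : Module (ZMod p) (Additive G) :=
    AddCommGroup.zmodModule fun g ↦ hG ▸ Monoid.pow_exponent_eq_one g.toMul
  let : Module (ZMod p) (Additive V) :=
    AddCommGroup.zmodModule fun v ↦ hV ▸ Monoid.pow_exponent_eq_one v.toMul
  obtain ⟨e⟩ : Nonempty (Additive G ≃ₗ[ZMod p] Additive V) :=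
    nonempty_linearEquiv_of_card_eq (ZMod p) hcard
  exact ⟨MulEquiv.toAdditive.symm e.toAddEquiv⟩

theorem nonempty_mulEquiv_iff_of_exponent_eq_two [Group V] [Finite G] [Finite V]
    (hV : Monoid.exponent V = 2) :
    Nonempty (G ≃* V) ↔ Nat.card G = Nat.card V ∧ Monoid.exponent G = 2 := by
  refine ⟨fun ⟨e⟩ ↦ ⟨Nat.card_congr e.toEquiv, (Monoid.exponent_eq_of_mulEquiv e).trans hV⟩, ?_⟩
  rintro ⟨hcard, hG⟩
  let : CommGroup G := { mul_comm := mul_comm_of_exponent_two hG }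
  let : CommGroup V := { mul_comm := mul_comm_of_exponent_two hV }
  exact nonempty_mulEquiv_of_exponent_eq_prime hG hV hcard

theorem nonempty_mulEquiv_iff_of_card_eq_prime_sq [Group V] [Finite G] [Finite V] {p : ℕ}
    [Fact p.Prime] (hcard : Nat.card V = p ^ 2) (hV : Monoid.exponent V = p) :
    Nonempty (G ≃* V) ↔ Nat.card G = p ^ 2 ∧ Monoid.exponent G = p := by
  refine ⟨fun ⟨e⟩ ↦ ⟨(Nat.card_congr e.toEquiv).trans hcard,
    (Monoid.exponent_eq_of_mulEquiv e).trans hV⟩, ?_⟩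
  rintro ⟨hcardG, hG⟩
  let := IsPGroup.commGroupOfCardEqPrimeSq hcardG
  let := IsPGroup.commGroupOfCardEqPrimeSq hcard
  exact nonempty_mulEquiv_of_exponent_eq_prime hG hV (hcardG.trans hcard.symm)

theorem nonempty_mulEquiv_zmod_prod_zmod_iff [Finite G] {p : ℕ} [Fact p.Prime] :
    Nonempty (G ≃* Multiplicative (ZMod p × ZMod p)) ↔
      Nat.card G = p ^ 2 ∧ Monoid.exponent G = p :=
  nonempty_mulEquiv_iff_of_card_eq_prime_sq (by simp [sq])
    (by simp [Monoid.exponent_multiplicative, AddMonoid.exponent_prod, ZMod.exponent])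

theorem nonempty_mulEquiv_zmod_two_prod_three_iff [Finite G] :
    Nonempty (G ≃* Multiplicative (ZMod 2 × ZMod 2 × ZMod 2)) ↔
      Nat.card G = 8 ∧ Monoid.exponent G = 2 := by
  rw [nonempty_mulEquiv_iff_of_exponent_eq_two
    (by simp [Monoid.exponent_multiplicative, AddMonoid.exponent_prod, ZMod.exponent])]
  simp

end ElementaryAbelian

theorem nonempty_mulEquiv_zmod_iff {n : ℕ} :
    Nonempty (G ≃* Multiplicative (ZMod n)) ↔ IsCyclic G ∧ Nat.card G = n := by
  constructor
  · rintro ⟨e⟩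
    exact ⟨e.isCyclic.2 inferInstance, (Nat.card_congr e.toEquiv).trans (Nat.card_zmod n)⟩
  · rintro ⟨_, hcard⟩
    exact ⟨mulEquivOfCyclicCardEq (hcard.trans (Nat.card_zmod n).symm)⟩

theorem card_eq_prime_sq_iff [Finite G] {p : ℕ} [hp : Fact p.Prime] :
    Nat.card G = p ^ 2 ↔ Nonempty (G ≃* Multiplicative (ZMod p × ZMod p)) ∨
      Nonempty (G ≃* Multiplicative (ZMod (p ^ 2))) := by
  rw [nonempty_mulEquiv_zmod_prod_zmod_iff, nonempty_mulEquiv_zmod_iff]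
  refine ⟨fun hcard ↦ ?_, fun h ↦ h.elim And.left And.right⟩
  by_cases hcyclic : IsCyclic G
  · exact .inr ⟨hcyclic, hcard⟩
  · exact .inl ⟨hcard, (not_isCyclic_iff_exponent_eq_prime hp.out hcard).1 hcyclic⟩

theorem prime_card_iff_isCyclic_and_prime_card :
    (Nat.card G).Prime ↔ IsCyclic G ∧ (Nat.card G).Prime :=
  ⟨fun h ↦ have := Fact.mk h; ⟨isCyclic_of_prime_card rfl, h⟩, And.right⟩

end

/-- A finite group `G` has the strong CFS property if and only if `G` is the trivial
group, a cyclic group of prime order, `C2 × C2`, `C4`, `C2 × C2 × C2`, or `C3 × C3`. -/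
theorem stmt_8 {G : Type*} [Group G] [Finite G] :
    HasStrongCFS G ↔
      (Nat.card G = 1 ∨
       (IsCyclic G ∧ (Nat.card G).Prime) ∨
       Nonempty (G ≃* Multiplicative (ZMod 2 × ZMod 2)) ∨
       Nonempty (G ≃* Multiplicative (ZMod 4)) ∨
       Nonempty (G ≃* Multiplicative (ZMod 2 × ZMod 2 × ZMod 2)) ∨
       Nonempty (G ≃* Multiplicative (ZMod 3 × ZMod 3))) := by
  have card_eq_four_iff : Nat.card G = 4 ↔ Nonempty (G ≃* Multiplicative (ZMod 2 × ZMod 2)) ∨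
      Nonempty (G ≃* Multiplicative (ZMod 4)) := card_eq_prime_sq_iff (p := 2)
  have mulEquiv_zmod_three_iff : Nonempty (G ≃* Multiplicative (ZMod 3 × ZMod 3)) ↔
      Nat.card G = 9 ∧ Monoid.exponent G = 3 := nonempty_mulEquiv_zmod_prod_zmod_iff
  rw [hasStrongCFS_iff_card_exponent, ← prime_card_iff_isCyclic_and_prime_card, card_eq_four_iff,
    or_assoc, nonempty_mulEquiv_zmod_two_prod_three_iff, mulEquiv_zmod_three_iff]
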